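/- A dihedral group of order 2t is minimal non-nilpotent if and only if t is an odd prime. -/

import Mathlib

/-- The homomorphism of dihedral groups induced by a homomorphism of their rotation groups. -/
def DihedralGroup.mapHom {m n : ℕ} (f : ZMod m →+ ZMod n) :
    DihedralGroup m →* DihedralGroup n where
  toFun
    | .r i => .r (f i)
    | .sr i => .sr (f i)
  map_one' := congrArg DihedralGroup.r f.map_zero
  map_mul' := by rintro (i | i) (j | j) <;> simp

theorem DihedralGroup.mapHom_injective {m n : ℕ} {f : ZMod m →+ ZMod n}
    (hf : Function.Injective f) : Function.Injective (DihedralGroup.mapHom f) := by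
  rintro (i | i) (j | j) h
  · exact congrArg _ (hf (DihedralGroup.r.inj h))
  · nomatch h
  · nomatch h
  · exact congrArg _ (hf (DihedralGroup.sr.inj h))

/-- For `m ≠ 0`, the integers modulo `p` embed into the integers modulo `p * m`. -/
theorem ZMod.exists_injective_addMonoidHom_mul (p : ℕ) {m : ℕ} (hm : m ≠ 0) :
    ∃ f : ZMod p →+ ZMod (p * m), Function.Injective f := by
  refine ⟨ZMod.lift p ⟨(Int.castAddHom (ZMod (p * m))).comp (AddMonoidHom.mulRight (m : ℤ)), ?_⟩,
    (ZMod.lift_injective _).2 fun i hi => ?_⟩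
  · have := ZMod.natCast_self (p * m)
    push_cast at this
    simpa using this
  · have hi' : ((i * m : ℤ) : ZMod (p * m)) = 0 := by simpa using hi
    rw [ZMod.intCast_zmod_eq_zero_iff_dvd, Nat.cast_mul] at hi'
    exact (ZMod.intCast_zmod_eq_zero_iff_dvd _ _).2
      ((mul_dvd_mul_iff_right (by exact_mod_cast hm)).1 hi')

theorem DihedralGroup.not_isNilpotent_of_odd {n : ℕ} (hn : Odd n) (h1 : n ≠ 1) :
    ¬ Group.IsNilpotent (DihedralGroup n) := fun _ =>
  Group.IsNilpotent.center_ne_bot _ (DihedralGroup.center_eq_bot_of_odd_ne_one hn h1)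

theorem DihedralGroup.isNilpotent_two_pow (k : ℕ) :
    Group.IsNilpotent (DihedralGroup (2 ^ k)) := by
  refine IsPGroup.isNilpotent (p := 2) (IsPGroup.of_card (n := k + 1) ?_)
  rw [DihedralGroup.nat_card, pow_succ']

/-- Every proper subgroup of a dihedral group of order twice a prime is nilpotent. -/
theorem DihedralGroup.isNilpotent_of_ne_top {p : ℕ} (hp : p.Prime)
    {H : Subgroup (DihedralGroup p)} (hH : H ≠ ⊤) : Group.IsNilpotent H := by
  have : NeZero p := ⟨hp.ne_zero⟩
  have isNilpotent_of_dvd_prime {q : ℕ} (hq : q.Prime) (h : Nat.card H ∣ q) :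
      Group.IsNilpotent H := by
    have : Fact q.Prime := ⟨hq⟩
    exact (IsPGroup.of_card_dvd_pow (n := 1) (by rwa [pow_one])).isNilpotent (p := q)
  have hcard : Nat.card H * H.index = 2 * p := by
    rw [H.card_mul_index, DihedralGroup.nat_card]
  obtain ⟨r, hr, c, hc⟩ := Nat.exists_prime_and_dvd (mt Subgroup.index_eq_one.1 hH)
  rw [hc] at hcard
  rcases hr.dvd_mul.1 (show r ∣ 2 * p from hcard ▸ (dvd_mul_right r c).mul_left _) with h | h
  · obtain rfl := (Nat.prime_dvd_prime_iff_eq hr Nat.prime_two).1 h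
    exact isNilpotent_of_dvd_prime hp ⟨c, by linarith⟩
  · obtain rfl := (Nat.prime_dvd_prime_iff_eq hr hp).1 h
    exact isNilpotent_of_dvd_prime Nat.prime_two
      ⟨c, Nat.eq_of_mul_eq_mul_right hr.pos (by linarith)⟩

theorem dihedral_minimal_nonNilpotent_iff (t : ℕ) (ht : 1 ≤ t) :
    (¬ Group.IsNilpotent (DihedralGroup t) ∧
      ∀ H : Subgroup (DihedralGroup t), H ≠ ⊤ → Group.IsNilpotent H) ↔
    (t.Prime ∧ Odd t) := by
  constructor
  · rintro ⟨hnil, hsub⟩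
    obtain ⟨k, rfl⟩ | ⟨p, hp, ⟨m, rfl⟩, hodd⟩ := t.eq_two_pow_or_exists_odd_prime_and_dvd
    · exact absurd (DihedralGroup.isNilpotent_two_pow k) hnil
    have hm : m ≠ 0 := by rintro rfl; simp at ht
    obtain ⟨f, hf⟩ := ZMod.exists_injective_addMonoidHom_mul p hm
    let e := MonoidHom.ofInjective (DihedralGroup.mapHom_injective hf)
    have htop : (DihedralGroup.mapHom f).range = ⊤ := by
      by_contra hne
      exact DihedralGroup.not_isNilpotent_of_odd hodd hp.ne_one
        ((Group.isNilpotent_congr e).2 (hsub _ hne))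
    have hcard := Nat.card_congr e.toEquiv
    rw [htop, Subgroup.card_top, DihedralGroup.nat_card, DihedralGroup.nat_card] at hcard
    have : p * m = p := by omega
    exact this.symm ▸ ⟨hp, hodd⟩
  · rintro ⟨hp, hodd⟩
    exact ⟨DihedralGroup.not_isNilpotent_of_odd hodd hp.ne_one,
      fun _ => DihedralGroup.isNilpotent_of_ne_top hp⟩
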